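/- Let A be a separable unital C*-algebra and let H be a separable infinite-dimensional Hilbert space. Suppose that A admits at least one finite-dimensional irreducible unital representation, and that every finite-dimensional irreducible unital representation π₁ of A has the property that for every unital representation ρ of A on a separable Hilbert space, π₁ ≺ ρ implies that π₁ is unitarily equivalent to a subrepresentation of ρ. Then WM(A,H) is closed and nowhere dense in Rep(A,H) in the point-strong operator topology. -/

import Mathlib

open scoped InnerProductSpace

noncomputable section

/-- The space of unital representations of `A` on `H`, i.e. unital `*`-homomorphisms
`A → B(H)`. -/
abbrev CRep (A H : Type*) [CStarAlgebra A] [NormedAddCommGroup H]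
    [InnerProductSpace ℂ H] [CompleteSpace H] : Type _ :=
  A →⋆ₐ[ℂ] (H →L[ℂ] H)

/-- The point-strong operator topology on `CRep A H`: the topology of pointwise convergence
with `B(H)` carrying the strong operator topology (i.e. pointwise convergence on vectors). -/
instance CRep.instTopologicalSpace (A H : Type*) [CStarAlgebra A] [NormedAddCommGroup H]
    [InnerProductSpace ℂ H] [CompleteSpace H] : TopologicalSpace (CRep A H) :=
  TopologicalSpace.induced (fun π => (fun (a : A) (x : H) => π a x)) inferInstance

/-- A closed subspace `K` is invariant under a unital representation `π`. -/
def CRepInvariant {A H : Type*} [CStarAlgebra A] [NormedAddCommGroup H]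
    [InnerProductSpace ℂ H] [CompleteSpace H]
    (π : CRep A H) (K : Submodule ℂ H) : Prop :=
  ∀ a : A, ∀ x ∈ K, π a x ∈ K

/-- A unital representation is weakly mixing if it admits no nonzero finite-dimensional
closed invariant subspace. -/
def CRepWeaklyMixing {A H : Type*} [CStarAlgebra A] [NormedAddCommGroup H]
    [InnerProductSpace ℂ H] [CompleteSpace H]
    (π : CRep A H) : Prop :=
  ∀ K : Submodule ℂ H, IsClosed (K : Set H) → FiniteDimensional ℂ K →
    CRepInvariant π K → K = ⊥

/-- A unital representation is irreducible if its only closed invariant subspaces are `⊥`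
and the whole space. -/
def CRepIrreducible {A H : Type*} [CStarAlgebra A] [NormedAddCommGroup H]
    [InnerProductSpace ℂ H] [CompleteSpace H] (π : CRep A H) : Prop :=
  ∀ K : Submodule ℂ H, IsClosed (K : Set H) → (∀ a : A, ∀ x ∈ K, π a x ∈ K) →
    K = ⊥ ∨ K = ⊤

/-- The weak containment relation `π ≺ ρ`. -/
def CRepPrec {A H K : Type*} [CStarAlgebra A] [NormedAddCommGroup H]
    [InnerProductSpace ℂ H] [CompleteSpace H] [NormedAddCommGroup K]
    [InnerProductSpace ℂ K] [CompleteSpace K]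
    (π : CRep A H) (ρ : CRep A K) : Prop :=
  ∀ (Ω : Finset A) (n : ℕ) (ξ : Fin n → H), Orthonormal ℂ ξ → ∀ ε : ℝ, 0 < ε →
    ∃ ζ : Fin n → K, Orthonormal ℂ ζ ∧
      ∀ a ∈ Ω, ∀ i : Fin n, ‖⟪π a (ξ i), ξ i⟫_ℂ - ⟪ρ a (ζ i), ζ i⟫_ℂ‖ < ε

section HilbertSpace

variable {E F : Type*} [NormedAddCommGroup E] [InnerProductSpace ℂ E] [CompleteSpace E]
  [NormedAddCommGroup F] [InnerProductSpace ℂ F] [CompleteSpace F]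

/-- An orthonormal family in a separable inner product space is countable. -/
theorem Orthonormal.countable_of_separableSpace {ι E : Type*} [NormedAddCommGroup E]
    [InnerProductSpace ℂ E] [TopologicalSpace.SeparableSpace E] {v : ι → E}
    (hv : Orthonormal ℂ v) : Countable ι := by
  refine Pairwise.countable_of_isOpen_disjoint (s := fun i => Metric.ball (v i) (1 / 2)) ?_
    (fun i => Metric.isOpen_ball) (fun i => Metric.nonempty_ball.2 (by norm_num))
  intro i j hij
  refine Metric.ball_disjoint_ball ?_
  have h := norm_sub_sq (𝕜 := ℂ) (v i) (v j)
  rw [hv.1 i, hv.1 j, hv.2 hij] at h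
  rw [dist_eq_norm]
  norm_num at h ⊢
  nlinarith [norm_nonneg (v i - v j)]

/-- A separable infinite-dimensional Hilbert space is isometrically isomorphic to `ℓ²(ℕ, ℂ)`. -/
theorem nonempty_linearIsometryEquiv_lp_nat [TopologicalSpace.SeparableSpace E]
    (hE : ¬ FiniteDimensional ℂ E) : Nonempty (E ≃ₗᵢ[ℂ] lp (fun _ : ℕ => ℂ) 2) := by
  obtain ⟨w, b, -⟩ := exists_hilbertBasis ℂ E
  have : Countable w := b.orthonormal.countable_of_separableSpace
  have : Infinite w := by
    by_contra h
    have := not_infinite_iff_finite.1 h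
    have := Fintype.ofFinite w
    exact hE b.toOrthonormalBasis.toBasis.finiteDimensional_of_finite
  obtain ⟨_⟩ := nonempty_denumerable w
  let e : ℕ ≃ w := (Denumerable.eqv w).symm
  refine ⟨(HilbertBasis.mk (b.orthonormal.comp e e.injective) ?_).repr⟩
  rw [e.surjective.range_comp, b.dense_span]

/-- The orthogonal complement of a finite-dimensional subspace of an infinite-dimensional space is
infinite-dimensional. -/
theorem not_finiteDimensional_orthogonal {E : Type*} [NormedAddCommGroup E]
    [InnerProductSpace ℂ E] (hE : ¬ FiniteDimensional ℂ E) (S : Submodule ℂ E)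
    [FiniteDimensional ℂ S] : ¬ FiniteDimensional ℂ Sᗮ := fun _ =>
  hE ((S.prodEquivOfIsCompl Sᗮ S.isCompl_orthogonal).finiteDimensional)

/-- An isometric embedding of a finite-dimensional subspace of a separable infinite-dimensional
Hilbert space into another such space extends to an isometric isomorphism. -/
theorem exists_linearIsometryEquiv_extending [TopologicalSpace.SeparableSpace E]
    [TopologicalSpace.SeparableSpace F] (hE : ¬ FiniteDimensional ℂ E)
    (hF : ¬ FiniteDimensional ℂ F) (S : Submodule ℂ E) [FiniteDimensional ℂ S]
    (j : S →ₗᵢ[ℂ] F) : ∃ U : E ≃ₗᵢ[ℂ] F, ∀ x : S, U x = j x := by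
  let R : Submodule ℂ F := LinearMap.range j.toLinearMap
  have : FiniteDimensional ℂ R := LinearMap.finiteDimensional_range _
  obtain ⟨e₁⟩ := nonempty_linearIsometryEquiv_lp_nat (not_finiteDimensional_orthogonal hE S)
  obtain ⟨e₂⟩ := nonempty_linearIsometryEquiv_lp_nat (not_finiteDimensional_orthogonal hF R)
  let e : Sᗮ ≃ₗᵢ[ℂ] Rᗮ := e₁.trans e₂.symm
  let L : E →ₗ[ℂ] F :=
    j.toLinearMap ∘ₗ S.orthogonalProjectionOnto.toLinearMap +
      Rᗮ.subtype ∘ₗ e.toLinearEquiv.toLinearMap ∘ₗ Sᗮ.orthogonalProjectionOnto.toLinearMap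
  have hL : ∀ x, L x = j (S.orthogonalProjectionOnto x) + e (Sᗮ.orthogonalProjectionOnto x) :=
    fun x => rfl
  have hnorm : ∀ x, ‖L x‖ = ‖x‖ := by
    intro x
    have horth : ⟪j (S.orthogonalProjectionOnto x),
        (e (Sᗮ.orthogonalProjectionOnto x) : F)⟫_ℂ = 0 :=
      (e (Sᗮ.orthogonalProjectionOnto x)).2 _ ⟨_, rfl⟩
    have h₁ := norm_add_sq_eq_norm_sq_add_norm_sq_of_inner_eq_zero _ _ horth
    have h₂ := S.norm_sq_eq_add_norm_sq_projection x
    rw [← hL, j.norm_map, ← Submodule.coe_norm (e _), e.norm_map] at h₁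
    rw [← sq_eq_sq₀ (norm_nonneg _) (norm_nonneg _), h₂, sq, h₁, sq, sq]
  have hsurj : Function.Surjective L := by
    intro y
    obtain ⟨s, hs⟩ := (R.orthogonalProjectionOnto y).2
    let t := e.symm (Rᗮ.orthogonalProjectionOnto y)
    refine ⟨s + t, ?_⟩
    have h₁ : S.orthogonalProjectionOnto (s + t : E) = s := by
      simp
    have h₂ : Sᗮ.orthogonalProjectionOnto (s + t : E) = t := by
      simp
    rw [hL, h₁, h₂]
    change j s = _ at hs
    rw [hs, e.apply_symm_apply]
    simp
  refine ⟨LinearIsometryEquiv.ofSurjective ⟨L, hnorm⟩ hsurj, fun x => ?_⟩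
  change L x = j x
  simp [hL]

/-- A countable Hilbert sum of a separable Hilbert space is separable. -/
theorem separableSpace_lp_nat {E : Type*} [NormedAddCommGroup E] [InnerProductSpace ℂ E]
    [TopologicalSpace.SeparableSpace E] :
    TopologicalSpace.SeparableSpace (lp (fun _ : ℕ => E) 2) := by
  have hs : TopologicalSpace.IsSeparable
      (⋃ i : ℕ, Set.range (lp.singleContinuousLinearMap ℂ (fun _ : ℕ => E) 2 i)) :=
    .iUnion fun i => TopologicalSpace.isSeparable_range (ContinuousLinearMap.continuous _)
  rw [← TopologicalSpace.isSeparable_univ_iff]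
  refine (hs.span (R := ℂ)).closure.mono fun f _ => ?_
  refine mem_closure_of_tendsto (lp.hasSum_single (by norm_num) f) (.of_forall fun s => ?_)
  exact Submodule.sum_mem _ fun i _ => Submodule.subset_span (Set.mem_iUnion.2 ⟨i, f i, rfl⟩)

/-- The inclusion of a summand into a Hilbert sum, as an isometry. -/
def lpSingleIsometry (H : Type*) [NormedAddCommGroup H] [InnerProductSpace ℂ H] (k : ℕ) :
    H →ₗᵢ[ℂ] lp (fun _ : ℕ => H) 2 where
  __ := lp.lsingle (𝕜 := ℂ) (E := fun _ : ℕ => H) 2 k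
  norm_map' x := lp.norm_single (E := fun _ : ℕ => H) two_pos k x

theorem lpSingleIsometry_apply {H : Type*} [NormedAddCommGroup H] [InnerProductSpace ℂ H]
    (k : ℕ) (x : H) :
    lpSingleIsometry H k x = lp.single (E := fun _ : ℕ => H) 2 k x := rfl

end HilbertSpace

namespace CRep

variable {A H K : Type*} [CStarAlgebra A] [NormedAddCommGroup H] [InnerProductSpace ℂ H]
  [CompleteSpace H] [NormedAddCommGroup K] [InnerProductSpace ℂ K] [CompleteSpace K]

theorem norm_apply_apply_le (π : CRep A H) (a : A) (x : H) : ‖π a x‖ ≤ ‖a‖ * ‖x‖ :=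
  (π a).le_of_opNorm_le (NonUnitalStarAlgHom.norm_apply_le π a) x

theorem inner_star_apply (π : CRep A H) (a : A) (x y : H) :
    ⟪π (star a) x, y⟫_ℂ = ⟪x, π a y⟫_ℂ := by
  rw [map_star, ContinuousLinearMap.star_eq_adjoint, ContinuousLinearMap.adjoint_inner_left]

/-- A representation from a family of bounded operators satisfying the algebraic identities
pointwise. -/
def ofPointwise (T : A → H →L[ℂ] H) (hadd : ∀ a b x, T (a + b) x = T a x + T b x)
    (hsmul : ∀ (c : ℂ) a x, T (c • a) x = c • T a x) (hone : ∀ x, T 1 x = x)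
    (hmul : ∀ a b x, T (a * b) x = T a (T b x))
    (hstar : ∀ a x y, ⟪T (star a) x, y⟫_ℂ = ⟪x, T a y⟫_ℂ) : CRep A H where
  __ := AlgHom.ofLinearMap
    { toFun := T
      map_add' := fun a b => ContinuousLinearMap.ext (hadd a b)
      map_smul' := fun c a => ContinuousLinearMap.ext (hsmul c a) }
    (ContinuousLinearMap.ext hone) fun a b => ContinuousLinearMap.ext (hmul a b)
  map_star' a := (ContinuousLinearMap.eq_adjoint_iff _ _).2 (hstar a)

/-- Transport of a representation along an isometric isomorphism. -/
def conj (π : CRep A H) (e : H ≃ₗᵢ[ℂ] K) : CRep A K :=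
  (e.conjStarAlgEquiv : (H →L[ℂ] H) →⋆ₐ[ℂ] (K →L[ℂ] K)).comp π

theorem conj_apply (π : CRep A H) (e : H ≃ₗᵢ[ℂ] K) (a : A) (y : K) :
    π.conj e a y = e (π a (e.symm y)) := rfl

/-- The direct sum of two representations. -/
def prod (π : CRep A H) (σ : CRep A K) : CRep A (WithLp 2 (H × K)) :=
  ofPointwise
    (fun a => (WithLp.prodContinuousLinearEquiv 2 ℂ H K).symm.toContinuousLinearMap ∘L
      (π a).prodMap (σ a) ∘L (WithLp.prodContinuousLinearEquiv 2 ℂ H K).toContinuousLinearMap)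
    (fun a b x => by simp [← WithLp.toLp_add, Prod.map])
    (fun c a x => by simp [← WithLp.toLp_smul, Prod.map])
    (fun x => by simp)
    (fun a b x => by simp [Prod.map])
    (fun a x y => by simp [WithLp.prod_inner_apply, inner_star_apply])

theorem prod_apply (π : CRep A H) (σ : CRep A K) (a : A) (x : WithLp 2 (H × K)) :
    π.prod σ a x = WithLp.toLp 2 (π a x.fst, σ a x.snd) := rfl

/-- The Hilbert sum of a sequence of representations on the same space. -/
def hilbertSum (π : ℕ → CRep A H) : CRep A (lp (fun _ : ℕ => H) 2) :=
  have hbound (a : A) (f : lp (fun _ : ℕ => H) 2) (k : ℕ) :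
      ‖π k a (f k)‖ ≤ ‖((‖a‖ : ℂ) • f : lp (fun _ : ℕ => H) 2) k‖ := by
    rw [lp.coeFn_smul, Pi.smul_apply, norm_smul, Complex.norm_real, norm_norm]
    exact (π k).norm_apply_apply_le a (f k)
  ofPointwise
    (fun a => LinearMap.mkContinuous
      { toFun := fun f => ⟨fun k => π k a (f k), (lp.memℓp ((‖a‖ : ℂ) • f)).mono' (hbound a f)⟩
        map_add' := fun f g => by ext k; exact map_add (π k a) (f k) (g k)
        map_smul' := fun c f => by ext k; exact map_smul (π k a) c (f k) } ‖a‖ fun f => by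
          refine (lp.norm_mono two_ne_zero (y := (‖a‖ : ℂ) • f) (hbound a f)).trans_eq ?_
          rw [norm_smul, Complex.norm_real, norm_norm])
    (fun a b f => by ext k; exact congr($(map_add (π k) a b) (f k)))
    (fun c a f => by ext k; simp)
    (fun f => by ext k; simp)
    (fun a b f => by ext k; simp)
    (fun a f g => by
      simp only [lp.inner_eq_tsum]
      exact tsum_congr fun k => (π k).inner_star_apply a _ _)

theorem hilbertSum_apply (π : ℕ → CRep A H) (a : A) (f : lp (fun _ : ℕ => H) 2) (k : ℕ) :
    hilbertSum π a f k = π k a (f k) := rfl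

/-- The compression of a representation along an isometry with invariant range. -/
def compress (π : CRep A H) (v : K →ₗᵢ[ℂ] H)
    (hv : CRepInvariant π (LinearMap.range v.toLinearMap)) : CRep A K :=
  have hadj (x : K) :
      ContinuousLinearMap.adjoint v.toContinuousLinearMap (v x) = x :=
    congr($(v.adjoint_comp_self) x)
  have hv' (a : A) (x : K) :
      v (ContinuousLinearMap.adjoint v.toContinuousLinearMap (π a (v x))) = π a (v x) := by
    obtain ⟨y, hy⟩ := hv a (v x) ⟨x, rfl⟩
    change v y = _ at hy
    rw [← hy, hadj]
  ofPointwise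
    (fun a => ContinuousLinearMap.adjoint v.toContinuousLinearMap ∘L π a ∘L
      v.toContinuousLinearMap)
    (fun a b x => by simp)
    (fun c a x => by simp)
    (fun x => by simp [hadj])
    (fun a b x => by simp [hv'])
    (fun a x y => by
      simp [ContinuousLinearMap.adjoint_inner_left, ContinuousLinearMap.adjoint_inner_right,
        inner_star_apply])

theorem map_compress_apply (π : CRep A H) (v : K →ₗᵢ[ℂ] H)
    (hv : CRepInvariant π (LinearMap.range v.toLinearMap)) (a : A) (x : K) :
    v (π.compress v hv a x) = π a (v x) := by
  obtain ⟨y, hy⟩ := hv a (v x) ⟨x, rfl⟩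
  change v y = _ at hy
  change v (ContinuousLinearMap.adjoint v.toContinuousLinearMap (π a (v x))) = _
  rw [← hy]
  exact congr(v ($(v.adjoint_comp_self) y))

end CRep

/-- Pointwise convergence of uniformly bounded additive maps extends from a dense set. -/
theorem tendsto_apply_of_dense {E F : Type*} [NormedAddCommGroup E] [NormedAddCommGroup F]
    {f : ℕ → E →+ F} {g : E →+ F} {C : ℝ} (hf : ∀ k x, ‖f k x‖ ≤ C * ‖x‖)
    (hg : ∀ x, ‖g x‖ ≤ C * ‖x‖) {s : Set E} (hs : Dense s)
    (h : ∀ x ∈ s, Filter.Tendsto (fun k => f k x) Filter.atTop (nhds (g x))) (x : E) :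
    Filter.Tendsto (fun k => f k x) Filter.atTop (nhds (g x)) := by
  have hC : 0 ≤ |C| := abs_nonneg C
  have hC' : ∀ y : E, C * ‖y‖ ≤ |C| * ‖y‖ := fun y => by gcongr; exact le_abs_self C
  rw [Metric.tendsto_atTop]
  intro ε hε
  obtain ⟨y, hy, hxy⟩ := hs.exists_dist_lt x (ε := ε / (4 * (|C| + 1))) (by positivity)
  rw [dist_eq_norm, lt_div_iff₀ (by positivity)] at hxy
  obtain ⟨N, hN⟩ := Metric.tendsto_atTop.1 (h y hy) (ε / 2) (by positivity)
  refine ⟨N, fun k hk => ?_⟩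
  have h₁ := hN k hk
  rw [dist_eq_norm] at h₁ ⊢
  have h₂ := (hf k (x - y)).trans (hC' _)
  have h₃ := (hg (x - y)).trans (hC' _)
  have heq : f k x - g x = f k (x - y) + (f k y - g y) - g (x - y) := by
    simp only [map_sub]; abel
  rw [heq]
  have h₄ := norm_sub_le (f k (x - y) + (f k y - g y)) (g (x - y))
  have h₅ := norm_add_le (f k (x - y)) (f k y - g y)
  nlinarith [norm_nonneg (x - y)]

namespace CRep

variable {A H : Type*} [CStarAlgebra A] [NormedAddCommGroup H] [InnerProductSpace ℂ H]
  [CompleteSpace H]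

theorem continuous_apply_apply (a : A) (x : H) : Continuous fun π : CRep A H => π a x :=
  have h : Continuous fun (π : CRep A H) (a : A) (x : H) => π a x := continuous_induced_dom
  (continuous_apply x).comp ((continuous_apply a).comp h)

/-- Over separable `A` and `H`, closure points of sets of representations are limits of
sequences. -/
theorem exists_seq_tendsto_of_mem_closure [TopologicalSpace.SeparableSpace A]
    [TopologicalSpace.SeparableSpace H] {S : Set (CRep A H)} {π : CRep A H} (hπ : π ∈ closure S) :
    ∃ ρ : ℕ → CRep A H, (∀ k, ρ k ∈ S) ∧
      ∀ a x, Filter.Tendsto (fun k => ρ k a x) Filter.atTop (nhds (π a x)) := by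
  let Φ : CRep A H → (ℕ × ℕ → H) := fun ρ p =>
    ρ (TopologicalSpace.denseSeq A p.1) (TopologicalSpace.denseSeq H p.2)
  have hΦ : Continuous Φ := continuous_pi fun p => continuous_apply_apply _ _
  obtain ⟨y, hy, hlim⟩ := mem_closure_iff_seq_limit.1
    (image_closure_subset_closure_image hΦ ⟨π, hπ, rfl⟩)
  choose ρ hρS hρ using hy
  refine ⟨ρ, hρS, ?_⟩
  obtain rfl : (fun k => Φ (ρ k)) = y := funext hρ
  rw [tendsto_pi_nhds] at hlim
  have hvec : ∀ i x, Filter.Tendsto (fun k => ρ k (TopologicalSpace.denseSeq A i) x)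
      Filter.atTop (nhds (π (TopologicalSpace.denseSeq A i) x)) := fun i =>
    tendsto_apply_of_dense (f := fun k => (ρ k (TopologicalSpace.denseSeq A i) : H →+ H))
      (g := (π (TopologicalSpace.denseSeq A i) : H →+ H))
      (fun k => norm_apply_apply_le (ρ k) _) (norm_apply_apply_le π _)
      (TopologicalSpace.denseRange_denseSeq H) (by rintro _ ⟨j, rfl⟩; exact hlim (i, j))
  intro a x
  refine tendsto_apply_of_dense
    (f := fun k => ((ContinuousLinearMap.apply ℂ H x : (H →L[ℂ] H) →+ H)).comp
      (ρ k : A →+ (H →L[ℂ] H)))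
    (g := ((ContinuousLinearMap.apply ℂ H x : (H →L[ℂ] H) →+ H)).comp (π : A →+ (H →L[ℂ] H)))
    (C := ‖x‖) (fun k b => ?_) (fun b => ?_) (TopologicalSpace.denseRange_denseSeq A) ?_ a
  · rw [mul_comm]; exact norm_apply_apply_le (ρ k) b x
  · rw [mul_comm]; exact norm_apply_apply_le π b x
  · rintro _ ⟨i, rfl⟩; exact hvec i x

end CRep

section WeaklyMixing

variable {A H : Type*} [CStarAlgebra A] [NormedAddCommGroup H] [InnerProductSpace ℂ H]
  [CompleteSpace H]

/-- A weakly mixing representation admits no nonzero intertwiner from a finite-dimensional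
space. -/
theorem CRepWeaklyMixing.eq_zero_of_intertwines {π : CRep A H} (hπ : CRepWeaklyMixing π)
    {E : Type*} [AddCommGroup E] [Module ℂ E] [FiniteDimensional ℂ E] (u : E →ₗ[ℂ] H)
    (σ : A → E → E) (hu : ∀ a x, π a (u x) = u (σ a x)) : u = 0 := by
  rw [← LinearMap.range_eq_bot]
  refine hπ _ (Submodule.closed_of_finiteDimensional _) inferInstance ?_
  rintro a _ ⟨x, rfl⟩
  exact ⟨σ a x, (hu a x).symm⟩

/-- A representation which is not weakly mixing has a nonzero finite-dimensional irreducible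
subrepresentation. -/
theorem exists_irreducible_of_not_weaklyMixing {π : CRep A H} (hπ : ¬ CRepWeaklyMixing π) :
    ∃ (n : ℕ) (_ : 0 < n) (π₁ : CRep A (EuclideanSpace ℂ (Fin n)))
      (v : EuclideanSpace ℂ (Fin n) →ₗᵢ[ℂ] H),
      CRepIrreducible π₁ ∧ ∀ a x, v (π₁ a x) = π a (v x) := by
  classical
  have hex : ∃ n, ∃ K : Submodule ℂ H, FiniteDimensional ℂ K ∧ CRepInvariant π K ∧ K ≠ ⊥ ∧
      Module.finrank ℂ K = n := by
    simp only [CRepWeaklyMixing, not_forall] at hπ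
    obtain ⟨K, -, hfin, hinv, hne⟩ := hπ
    exact ⟨_, K, hfin, hinv, hne, rfl⟩
  obtain ⟨K, hfin, hinv, hne, hK⟩ := Nat.find_spec hex
  have hmin := fun m => @Nat.find_min' _ _ hex m
  rw [← hK] at hmin
  let v : EuclideanSpace ℂ (Fin (Module.finrank ℂ K)) →ₗᵢ[ℂ] H :=
    K.subtypeₗᵢ.comp (stdOrthonormalBasis ℂ K).repr.symm.toLinearIsometry
  have hrange : LinearMap.range v.toLinearMap = K := by
    ext x
    constructor
    · rintro ⟨y, rfl⟩
      exact ((stdOrthonormalBasis ℂ K).repr.symm y).2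
    · intro hx
      exact ⟨(stdOrthonormalBasis ℂ K).repr ⟨x, hx⟩, by
        simp [v]⟩
  have hv : CRepInvariant π (LinearMap.range v.toLinearMap) := by
    rwa [← hrange] at hinv
  refine ⟨Module.finrank ℂ K, ?_, π.compress v hv, v, fun L _ hL => ?_,
    π.map_compress_apply v hv⟩
  · exact Module.finrank_pos_iff.2 (Submodule.nontrivial_iff_ne_bot.2 hne)
  · refine or_iff_not_imp_left.2 fun hLne => ?_
    have hdim : Module.finrank ℂ (L.map v.toLinearMap) = Module.finrank ℂ L :=
      (Submodule.equivMapOfInjective v.toLinearMap v.injective L).finrank_eq.symm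
    refine Submodule.eq_top_of_finrank_eq (le_antisymm (Submodule.finrank_le _) ?_)
    rw [finrank_euclideanSpace_fin]
    refine hmin _ ⟨L.map v.toLinearMap, inferInstance, ?_, ?_, hdim⟩
    · rintro a _ ⟨x, hx, rfl⟩
      exact ⟨_, hL a x hx, π.map_compress_apply v hv a x⟩
    · exact fun h => hLne (Submodule.map_injective_of_injective v.injective
        (h.trans (Submodule.map_bot v.toLinearMap).symm))

/-- Every representation on a separable infinite-dimensional space is a limit of
representations which are not weakly mixing, once `A` has a nonzero finite-dimensional
representation. -/
theorem dense_not_weaklyMixing [TopologicalSpace.SeparableSpace H]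
    (hH : ¬ FiniteDimensional ℂ H) {n : ℕ} (hn : 0 < n)
    (σ : CRep A (EuclideanSpace ℂ (Fin n))) :
    Dense {π : CRep A H | ¬ CRepWeaklyMixing π} := by
  intro π
  have hnt : Nonempty (Fin n) := ⟨⟨0, hn⟩⟩
  have hG : ¬ FiniteDimensional ℂ (WithLp 2 (H × EuclideanSpace ℂ (Fin n))) := fun _ =>
    hH (FiniteDimensional.of_surjective
      (WithLp.fstL 2 ℂ H (EuclideanSpace ℂ (Fin n))).toLinearMap
      fun x => ⟨WithLp.toLp 2 (x, 0), rfl⟩)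
  have : TopologicalSpace.SeparableSpace (WithLp 2 (H × EuclideanSpace ℂ (Fin n))) :=
    (WithLp.prodContinuousLinearEquiv 2 ℂ H
      (EuclideanSpace ℂ (Fin n))).symm.surjective.denseRange.separableSpace
        (ContinuousLinearEquiv.continuous _)
  have key : ∀ I : Finset (A × H), ∃ ρ : CRep A H, ¬ CRepWeaklyMixing ρ ∧
      ∀ p ∈ I, ρ p.1 p.2 = π p.1 p.2 := by
    classical
    intro I
    let S : Submodule ℂ H :=
      Submodule.span ℂ (I.image Prod.snd ∪ I.image fun p => π p.1 p.2 : Finset H)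
    let j : S →ₗᵢ[ℂ] WithLp 2 (H × EuclideanSpace ℂ (Fin n)) :=
      { toFun := fun x => WithLp.toLp 2 ((x : H), 0)
        map_add' := fun x y => by simp [← WithLp.toLp_add]
        map_smul' := fun c x => by simp [← WithLp.toLp_smul]
        norm_map' := fun x => by simp }
    obtain ⟨U, hU⟩ := exists_linearIsometryEquiv_extending hH hG S j
    replace hU : ∀ x ∈ S, U x = WithLp.toLp 2 (x, 0) := fun x hx => hU ⟨x, hx⟩
    refine ⟨(π.prod σ).conj U.symm, fun hWM => ?_, fun p hp => ?_⟩
    · let u : EuclideanSpace ℂ (Fin n) →ₗ[ℂ] H :=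
        U.symm.toLinearEquiv.toLinearMap ∘ₗ
          (WithLp.linearEquiv 2 ℂ (H × EuclideanSpace ℂ (Fin n))).symm.toLinearMap ∘ₗ
            LinearMap.inr ℂ H (EuclideanSpace ℂ (Fin n))
      have hu : ∀ x, u x = U.symm (WithLp.toLp 2 (0, x)) := fun x => rfl
      have hzero := hWM.eq_zero_of_intertwines u (fun a x => σ a x) fun a x => by
        simp [hu, CRep.conj_apply, CRep.prod_apply]
      obtain ⟨x, hx⟩ := exists_ne (0 : EuclideanSpace ℂ (Fin n))
      have hux : U.symm (WithLp.toLp 2 (0, x)) = 0 := by rw [← hu, hzero]; rfl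
      rw [LinearIsometryEquiv.map_eq_zero_iff] at hux
      exact hx congr(($hux).snd)
    · have h₁ : p.2 ∈ S := Submodule.subset_span (by
        simpa using Or.inl ⟨p.1, hp⟩)
      have h₂ : π p.1 p.2 ∈ S := Submodule.subset_span (by
        simpa using Or.inr ⟨p.1, p.2, hp, rfl⟩)
      rw [CRep.conj_apply, LinearIsometryEquiv.symm_symm, hU _ h₁, CRep.prod_apply,
        LinearIsometryEquiv.symm_apply_eq, hU _ h₂]
      simp
  choose ρ hρ hρπ using key
  refine mem_closure_of_tendsto (f := ρ) (b := Filter.atTop) ?_ (.of_forall hρ)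
  rw [nhds_induced, Filter.tendsto_comap_iff, tendsto_pi_nhds]
  refine fun a => tendsto_pi_nhds.2 fun x => tendsto_nhds_of_eventually_eq ?_
  filter_upwards [Filter.eventually_ge_atTop {(a, x)}] with I hI
  exact hρπ I (a, x) (hI (Finset.mem_singleton_self _))

/-- A representation that embeds into the pointwise limit of a sequence of representations is
weakly contained in their Hilbert sum. -/
theorem CRepPrec.hilbertSum_of_tendsto {K L : Type*} [NormedAddCommGroup K]
    [InnerProductSpace ℂ K] [CompleteSpace K] [NormedAddCommGroup L] [InnerProductSpace ℂ L]
    [CompleteSpace L] {π : CRep A H} {ρ : ℕ → CRep A H}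
    (hρ : ∀ a x, Filter.Tendsto (fun k => ρ k a x) Filter.atTop (nhds (π a x)))
    {π₁ : CRep A K} (v : K →ₗᵢ[ℂ] H) (hv : ∀ a x, v (π₁ a x) = π a (v x))
    (e : lp (fun _ : ℕ => H) 2 ≃ₗᵢ[ℂ] L) : CRepPrec π₁ ((CRep.hilbertSum ρ).conj e) := by
  intro Ω n ξ hξ ε hε
  have hev : ∀ᶠ k in Filter.atTop, ∀ a ∈ Ω, ∀ i : Fin n,
      ‖⟪π a (v (ξ i)), v (ξ i)⟫_ℂ - ⟪ρ k a (v (ξ i)), v (ξ i)⟫_ℂ‖ < ε := by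
    refine (Filter.eventually_all_finset Ω).2 fun a _ => Filter.eventually_all.2 fun i => ?_
    have hlim := ((hρ a (v (ξ i))).inner (𝕜 := ℂ)
      (tendsto_const_nhds (x := v (ξ i)))).eventually (Metric.ball_mem_nhds _ hε)
    filter_upwards [hlim] with k hk
    rwa [← dist_eq_norm, dist_comm]
  obtain ⟨k, hk⟩ := hev.exists
  refine ⟨fun i => e (lpSingleIsometry H k (v (ξ i))),
    hξ.comp_linearIsometry (e.toLinearIsometry.comp ((lpSingleIsometry H k).comp v)),
    fun a ha i => ?_⟩
  rw [CRep.conj_apply, e.symm_apply_apply, e.inner_map_map, lpSingleIsometry_apply,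
    lp.inner_single_right, CRep.hilbertSum_apply, lp.single_apply_self, ← v.inner_map_map, hv]
  exact hk a ha i

end WeaklyMixing

/-- let `A` be a separable unital C*-algebra admitting a finite-dimensional
irreducible unital representation, and suppose every finite-dimensional irreducible unital
representation `π₁` of `A` which is weakly contained (in the sense of `≺`) in a unital
representation `ρ` of `A` on a separable Hilbert space is unitarily equivalent to a
subrepresentation of `ρ`. Then for a separable infinite-dimensional Hilbert space `H`, the
set of weakly mixing representations is closed and nowhere dense in `Rep(A,H)` in the
point-strong operator topology. -/
theorem isClosed_isNowhereDense_weaklyMixing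
    (A H : Type*) [CStarAlgebra A] [TopologicalSpace.SeparableSpace A]
    [NormedAddCommGroup H] [InnerProductSpace ℂ H] [CompleteSpace H]
    [TopologicalSpace.SeparableSpace H] (hH : ¬ FiniteDimensional ℂ H)
    (hex : ∃ (n : ℕ) (_ : 0 < n) (ρ : CRep A (EuclideanSpace ℂ (Fin n))),
      CRepIrreducible ρ)
    (hyp : ∀ (n : ℕ) (π₁ : CRep A (EuclideanSpace ℂ (Fin n))), CRepIrreducible π₁ →
      ∀ (K : Type) (_ : NormedAddCommGroup K) (_ : InnerProductSpace ℂ K)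
        (_ : CompleteSpace K) (_ : TopologicalSpace.SeparableSpace K)
        (ρ : CRep A K), CRepPrec π₁ ρ →
          ∃ u : EuclideanSpace ℂ (Fin n) →ₗᵢ[ℂ] K,
            ∀ (a : A) (x : EuclideanSpace ℂ (Fin n)), ρ a (u x) = u (π₁ a x)) :
    IsClosed {π : CRep A H | CRepWeaklyMixing π} ∧
      IsNowhereDense {π : CRep A H | CRepWeaklyMixing π} := by
  obtain ⟨n, hn, σ, -⟩ := hex
  have hclosed : IsClosed {π : CRep A H | CRepWeaklyMixing π} := by
    refine isClosed_of_closure_subset fun π hπ => ?_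
    by_contra hnot
    obtain ⟨m, hm, π₁, v, hirr, hv⟩ := exists_irreducible_of_not_weaklyMixing hnot
    obtain ⟨ρ, hWM, hρ⟩ := CRep.exists_seq_tendsto_of_mem_closure hπ
    have hsep := separableSpace_lp_nat (E := H)
    have hinf : ¬ FiniteDimensional ℂ (lp (fun _ : ℕ => H) 2) := fun _ =>
      hH (FiniteDimensional.of_injective (lpSingleIsometry H 0).toLinearMap
        (lpSingleIsometry H 0).injective)
    obtain ⟨e⟩ := nonempty_linearIsometryEquiv_lp_nat hinf
    obtain ⟨u, hu⟩ := hyp m π₁ hirr (lp (fun _ : ℕ => ℂ) 2) inferInstance inferInstance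
      inferInstance separableSpace_lp_nat _ (CRepPrec.hilbertSum_of_tendsto hρ v hv e)
    have hcoord : ∀ (k : ℕ) x, e.symm (u x) k = 0 := fun k x =>
      congr($((hWM k).eq_zero_of_intertwines
        ((lp.evalCLM ℂ (fun _ : ℕ => H) 2 k).toLinearMap ∘ₗ e.symm.toLinearEquiv.toLinearMap ∘ₗ
          u.toLinearMap) (fun a x => π₁ a x) fun a x => by
            change ρ k a (e.symm (u x) k) = e.symm (u (π₁ a x)) k
            rw [← hu, CRep.conj_apply, e.symm_apply_apply, CRep.hilbertSum_apply]) x)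
    have : Nonempty (Fin m) := ⟨⟨0, hm⟩⟩
    obtain ⟨x, hx⟩ := exists_ne (0 : EuclideanSpace ℂ (Fin m))
    have hzero : e.symm (u x) = 0 := by
      ext k
      exact hcoord k x
    rw [LinearIsometryEquiv.map_eq_zero_iff] at hzero
    exact hx (u.injective (hzero.trans u.map_zero.symm))
  refine ⟨hclosed, ?_⟩
  rw [hclosed.isNowhereDense_iff, interior_eq_empty_iff_dense_compl]
  exact dense_not_weaklyMixing hH hn σ
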